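/- Let p be a prime, q = 1/p, and let n ≥ 2 and μ ≥ 2 be integers. Then P(n, p^μ) = (1−q)·P(n−1, p^μ) + q(1−q^{n−1})·P(n−2, p^μ) + q^n(1−q)·P(n−1, p^{μ−1}) + q^{n+1}·P(n, p^{μ−2}). (When μ = 2 the last term vanishes automatically, since P(n, p^0) = P(n, 1) = 0.) -/

import Mathlib

/-- Number of symmetric `n × n` matrices over `ZMod m` with nonzero determinant. -/
noncomputable def Nsym (n m : ℕ) : ℕ :=
  Nat.card {A : Matrix (Fin n) (Fin n) (ZMod m) // A.IsSymm ∧ A.det ≠ 0}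

/-- Proportion of symmetric `n × n` matrices over `ZMod m` with nonzero determinant. -/
noncomputable def Psym (n m : ℕ) : ℝ :=
  (Nsym n m : ℝ) / (m : ℝ) ^ (n * (n + 1) / 2)

/-!
For a symmetric matrix `A = [a, v; vᵀ, B]` over `ℤ/p^μ`, the distribution of `det A` up to units is
found by conditioning on the border `(a, v)`.

* If `a` is a unit, a Schur complement reduces to size `n - 1`.
* If `p ∣ a` and some entry of `v` is a unit, a congruence moves `v` to a coordinate vector; the
  leading `2 × 2` block is then invertible and its Schur complement reduces to size `n - 2`.
* If `a = p a'` and `v = p v'` with `a'` a unit, then `det A` is `p` times a unit times a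
  determinant of size `n - 1`.
* If `a = p² a'` and `v = p v'`, then `det A = p² det [a', v'; v'ᵀ, B]`.

In each case the smaller matrix is again uniform, because subtracting a fixed symmetric matrix and
congruence by an invertible one are bijections. Only the powers `p ^ k` with `k ≤ 2` enter as
factors of the determinant, and `p ^ k * x = 0` in `ℤ/p^μ` exactly when `x = 0` in `ℤ/p^(μ-k)`.
-/

open Matrix IsLocalRing
open scoped BigOperators

section Expectation

variable {G H : Type*} [AddCommGroup G] [AddCommGroup H] [Fintype G] [Fintype H]

lemma expect_comp_of_surjective (φ : G →+ H) (hφ : Function.Surjective φ) (f : H → ℝ) :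
    𝔼 g, f (φ g) = 𝔼 h, f h := by
  classical
  have hfiber (h : H) : ({g | φ g = h} : Finset G).card = Nat.card φ.ker := by
    rw [AddMonoidHom.card_fiber_eq_of_mem_range φ (hφ h) (hφ 0), ← Fintype.card_subtype,
      ← Nat.card_eq_fintype_card]
    rfl
  have hsum : ∑ g, f (φ g) = Nat.card φ.ker * ∑ h, f h := by
    rw [← Finset.sum_fiberwise' Finset.univ φ f, Finset.mul_sum]
    simp only [Finset.sum_const, hfiber, nsmul_eq_mul]
  have hcard : (Nat.card φ.ker : ℝ) * Fintype.card H = Fintype.card G := by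
    rw [← Nat.card_eq_fintype_card, ← Nat.card_eq_fintype_card, ← φ.ker.card_mul_index,
      AddSubgroup.index_ker, AddMonoidHom.range_eq_top.mpr hφ, AddSubgroup.card_top, Nat.cast_mul]
  rw [Fintype.expect_eq_sum_div_card, Fintype.expect_eq_sum_div_card, hsum, ← hcard]
  exact mul_div_mul_left _ _ (by exact_mod_cast Nat.card_pos.ne')

lemma expect_eq_of_const_off_range (φ : H →+ G) {f : G → ℝ} {c : ℝ}
    (hf : ∀ x ∉ φ.range, f x = c) :
    𝔼 x, f x = (1 - 1 / φ.range.index) * c + 1 / φ.range.index * 𝔼 y, f (φ y) := by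
  classical
  have hsupp : ∑ x, (f x - c) = ∑ x : φ.range, (f x - c) := by
    rw [← Finset.sum_subtype ({x | x ∈ φ.range} : Finset G) (by simp) (f · - c),
      Finset.sum_filter_of_ne fun x _ hx => not_imp_comm.mp (hf x) (sub_ne_zero.mp hx)]
  have hcard : (Fintype.card G : ℝ) = Fintype.card φ.range * φ.range.index := by
    rw [← Nat.card_eq_fintype_card, ← Nat.card_eq_fintype_card, ← φ.range.card_mul_index,
      Nat.cast_mul]
  have hsub : 𝔼 x, (f x - c) = 1 / φ.range.index * 𝔼 y, (f (φ y) - c) := by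
    have hrange := expect_comp_of_surjective φ.rangeRestrict φ.rangeRestrict_surjective
      (fun x => f x - c)
    simp only [AddMonoidHom.coe_rangeRestrict] at hrange
    rw [hrange, Fintype.expect_eq_sum_div_card, Fintype.expect_eq_sum_div_card, hsupp, hcard]
    ring
  simp only [Finset.expect_sub_distrib, Fintype.expect_const] at hsub
  linear_combination hsub

end Expectation

section SymmetricMatrices

variable {ι κ R S : Type*}

/-- The additive group of symmetric matrices; the determinants in `P(n, m)` are averaged over it. -/
def symmetricMatrices (ι R : Type*) [AddCommGroup R] : AddSubgroup (Matrix ι ι R) where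
  carrier := {A | A.IsSymm}
  add_mem' := IsSymm.add
  zero_mem' := isSymm_zero
  neg_mem' := IsSymm.neg

noncomputable instance [AddCommGroup R] [Finite ι] [Finite R] :
    Fintype (symmetricMatrices ι R) :=
  Fintype.ofFinite _

lemma card_symmetricMatrices [AddCommGroup R] [Fintype ι] [Fintype R] :
    Fintype.card (symmetricMatrices ι R)
      = Fintype.card R ^ (Fintype.card ι * (Fintype.card ι + 1) / 2) := by
  classical
  let e : symmetricMatrices ι R ≃ (Sym2 ι → R) :=
    (Equiv.subtypeEquivRight fun A => IsSymm.ext_iff.trans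
      (forall₂_congr fun _ _ => eq_comm)).trans Sym2.lift
  rw [Fintype.card_congr e, Fintype.card_fun, Sym2.card, Nat.choose_two_right,
    Nat.add_sub_cancel, mul_comm (_ + 1)]

/-- The matrix `[a, v; vᵀ, B]`, through which the mean over symmetric matrices of size `n + 1` is
taken one border at a time. The larger index type is `Unit ⊕ ι`, to use block matrices. -/
def bordered (a : R) (v : ι → R) (B : Matrix ι ι R) : Matrix (Unit ⊕ ι) (Unit ⊕ ι) R :=
  fromBlocks (of fun _ _ => a) (replicateRow Unit v) (replicateCol Unit v) B

lemma isSymm_bordered {B : Matrix ι ι R} (hB : B.IsSymm) (a : R) (v : ι → R) :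
    (bordered a v B).IsSymm :=
  IsSymm.fromBlocks rfl rfl hB

/-- Every symmetric matrix of positive size is uniquely a bordered one. -/
def borderedEquiv (ι R : Type*) [AddCommGroup R] :
    R × (ι → R) × symmetricMatrices ι R ≃ symmetricMatrices (Unit ⊕ ι) R where
  toFun x := ⟨bordered x.1 x.2.1 x.2.2, isSymm_bordered x.2.2.2 _ _⟩
  invFun A := (A.1 (.inl ()) (.inl ()), fun i => A.1 (.inl ()) (.inr i),
    ⟨A.1.toBlocks₂₂, IsSymm.submatrix A.2 _⟩)
  left_inv _ := rfl
  right_inv A := by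
    have hA : A.1.IsSymm := A.2
    ext (_ | i) (_ | j)
    exacts [rfl, rfl, hA.apply _ _, rfl]

lemma expect_symmetricMatrices_sum [AddCommGroup R] [Fintype ι] [DecidableEq ι] [Fintype R]
    (g : Matrix (Unit ⊕ ι) (Unit ⊕ ι) R → ℝ) :
    𝔼 A : symmetricMatrices (Unit ⊕ ι) R, g A
      = 𝔼 a, 𝔼 v, 𝔼 B : symmetricMatrices ι R, g (bordered a v B) := by
  rw [← Fintype.expect_equiv (borderedEquiv ι R) (fun x => g (bordered x.1 x.2.1 x.2.2)) _
    fun _ => rfl, ← Finset.univ_product_univ, Finset.expect_product]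
  simp only [← Finset.univ_product_univ, Finset.expect_product]

variable [CommRing R] [Fintype ι] [DecidableEq ι]

lemma det_transpose_mul_mul (P X : Matrix ι ι R) : (Pᵀ * X * P).det = P.det ^ 2 * X.det := by
  rw [det_mul, det_mul, det_transpose]
  ring

lemma det_bordered_congr (s a : R) (v : ι → R) (h B : Matrix ι ι R) :
    (bordered (s ^ 2 * a) (s • (v ᵥ* h)) (hᵀ * B * h)).det
      = (s * h.det) ^ 2 * (bordered a v B).det := by
  have hcongr : bordered (s ^ 2 * a) (s • (v ᵥ* h)) (hᵀ * B * h)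
      = (fromBlocks (s • 1) 0 0 h)ᵀ * bordered a v B * fromBlocks (s • 1) 0 0 h := by
    simp only [bordered, fromBlocks_transpose, fromBlocks_multiply]
    congr 1
    · ext; simp [sq, mul_assoc]
    · ext; simp [vecMul, dotProduct, mul_apply]
    · ext; simp [vecMul, dotProduct, mul_apply, mul_comm]
    · simp
  rw [hcongr, det_transpose_mul_mul, det_fromBlocks_zero₂₁]
  simp

lemma det_bordered_smul (s : R) (w : ι → R) (B : Matrix ι ι R) :
    (bordered s (s • w) B).det = s * (B - s • vecMulVec w w).det := by
  have hcongr : bordered s (s • w) B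
      = (fromBlocks 1 (replicateRow Unit w) 0 1)ᵀ * fromBlocks (s • 1) 0 0 (B - s • vecMulVec w w)
        * fromBlocks 1 (replicateRow Unit w) 0 1 := by
    simp only [bordered, fromBlocks_transpose, fromBlocks_multiply]
    congr 1
    · ext; simp
    · ext; simp
    · ext; simp
    · ext; simp [vecMulVec, mul_apply]
  rw [hcongr, det_transpose_mul_mul, det_fromBlocks_zero₂₁, det_fromBlocks_zero₂₁]
  simp

lemma exists_isUnit_single_vecMul (i : ι) {v : ι → R} (hv : ∃ j, IsUnit (v j)) :
    ∃ h : Matrix ι ι R, IsUnit h ∧ Pi.single i 1 ᵥ* h = v := by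
  obtain ⟨j, hj⟩ := hv
  refine ⟨((1 : Matrix ι ι R).updateRow j v).submatrix (Equiv.swap i j) id, ?_, ?_⟩
  · have hdet : ((1 : Matrix ι ι R).updateRow j v).det = v j := by
      rw [← cramer_transpose_apply, transpose_one, cramer_one, Module.End.one_apply]
    rw [isUnit_iff_isUnit_det, det_permute, hdet]
    exact ((Units.isUnit _).map (Int.castRingHom R)).mul hj
  · rw [single_one_vecMul]
    ext k
    simp

/-- The mean of `f (det A)` over the symmetric matrices `A` indexed by `ι`. For `f` the indicator of
the nonzero elements of `ZMod m` it is the proportion `P(n, m)`. -/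
noncomputable def symDetMean (ι : Type*) {R : Type*} [Fintype ι] [DecidableEq ι] [CommRing R]
    [Finite R] (f : R → ℝ) : ℝ :=
  𝔼 A : symmetricMatrices ι R, f A.1.det

lemma symDetMean_congr [Finite R] [Fintype κ] [DecidableEq κ] (e : ι ≃ κ) (f : R → ℝ) :
    symDetMean ι f = symDetMean κ f :=
  let E : symmetricMatrices ι R ≃ symmetricMatrices κ R :=
    (Matrix.reindex e e).subtypeEquiv fun _ => (isSymm_reindex_iff e).symm
  Fintype.expect_equiv E _ _ fun A => congrArg f (det_reindex_self e A.1).symm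

lemma symDetMean_comp_ringHom [CommRing S] [Finite R] [Finite S] (φ : R →+* S)
    (hφ : Function.Surjective φ) (f : S → ℝ) :
    symDetMean ι (fun x => f (φ x)) = symDetMean ι f := by
  let Φ : symmetricMatrices ι R →+ symmetricMatrices ι S :=
    (φ.mapMatrix.toAddMonoidHom.comp (symmetricMatrices ι R).subtype).codRestrict _
      fun A => IsSymm.map A.2 φ
  have hΦ : Function.Surjective Φ := fun B =>
    ⟨⟨B.1.map (Function.surjInv hφ), IsSymm.map B.2 _⟩,
      Subtype.ext <| Matrix.ext fun _ _ => Function.surjInv_eq hφ _⟩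
  rw [symDetMean, symDetMean, ← expect_comp_of_surjective Φ hΦ]
  simp only [φ.map_det]
  rfl

lemma expect_symmetricMatrices_congr [Finite R] {h : Matrix ι ι R} (hh : IsUnit h)
    (g : Matrix ι ι R → ℝ) :
    𝔼 B : symmetricMatrices ι R, g (hᵀ * B * h) = 𝔼 B : symmetricMatrices ι R, g B := by
  let Φ (B : symmetricMatrices ι R) : symmetricMatrices ι R := ⟨hᵀ * B * h, by
    have hB : B.1.IsSymm := B.2
    simp [symmetricMatrices, IsSymm, Matrix.mul_assoc, hB.eq]⟩
  have hΦ : Function.Injective Φ := fun B C hBC => Subtype.ext <|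
    ((isUnit_transpose h).mpr hh).mul_left_cancel <| hh.mul_right_cancel <| congrArg Subtype.val hBC
  exact Fintype.expect_bijective Φ (Finite.injective_iff_bijective.mp hΦ) _ _ fun _ => rfl

lemma expect_det_bordered_smul [Finite R] (f : R → ℝ) (s : R) (w : ι → R) :
    𝔼 B : symmetricMatrices ι R, f (bordered s (s • w) B.1).det
      = symDetMean ι (fun x => f (s * x)) := by
  let W : symmetricMatrices ι R := ⟨s • vecMulVec w w, IsSymm.smul (transpose_vecMulVec w w) s⟩
  refine Fintype.expect_equiv (Equiv.subRight W) _ _ fun B => ?_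
  rw [det_bordered_smul]
  rfl

lemma det_bordered_single_bordered (a c : R) (w : ι → R) (D : Matrix ι ι R) :
    (bordered a (Pi.single (.inl ()) 1) (bordered c w D)).det
      = (fromBlocks !![a, 1; 1, c] (of ![0, w]) (of ![0, w])ᵀ D).det := by
  obtain ⟨e, he₀, he₁, he⟩ : ∃ e : Fin 2 ⊕ ι ≃ Unit ⊕ Unit ⊕ ι, e (.inl 0) = .inl () ∧
      e (.inl 1) = .inr (.inl ()) ∧ ∀ i, e (.inr i) = .inr (.inr i) :=
    ⟨((finTwoEquiv.trans Equiv.boolEquivPUnitSumPUnit).sumCongr (.refl ι)).trans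
      (.sumAssoc _ _ _), rfl, rfl, fun _ => rfl⟩
  rw [← det_submatrix_equiv_self e]
  congr 1
  simp [← Matrix.ext_iff, Sum.forall, Fin.forall_fin_two, bordered, he₀, he₁, he]

variable {f : R → ℝ} (hf : ∀ ⦃x y⦄, Associated x y → f x = f y)
include hf

lemma expect_det_bordered_isUnit [Finite R] (t : R) {a : R} (ha : IsUnit a) (v : ι → R) :
    𝔼 B : symmetricMatrices ι R, f (bordered (t * a) (t • v) B.1).det
      = symDetMean ι (fun x => f (t * x)) := by
  have hv : t • v = (t * a) • ha.unit⁻¹ • v := by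
    rw [mul_smul, Units.smul_def, smul_smul a, ha.mul_val_inv, one_smul]
  rw [hv, expect_det_bordered_smul]
  congr with x
  exact hf ((associated_mul_unit_left t a ha).mul_right x)

lemma expect_det_fromBlocks [Finite R] [Fintype κ] [DecidableEq κ] {K : Matrix κ κ R}
    (hK : IsUnit K.det) (hsymm : K.IsSymm) (L : Matrix κ ι R) :
    𝔼 D : symmetricMatrices ι R, f (fromBlocks K L Lᵀ D.1).det = symDetMean ι f := by
  have := K.invertibleOfIsUnitDet hK
  let W : symmetricMatrices ι R := ⟨Lᵀ * K⁻¹ * L, by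
    simp [symmetricMatrices, IsSymm, transpose_nonsing_inv, hsymm.eq, Matrix.mul_assoc]⟩
  refine Fintype.expect_equiv (Equiv.subRight W) _ _ fun D => ?_
  rw [det_fromBlocks₁₁, invOf_eq_nonsing_inv]
  exact hf (associated_unit_mul_left _ _ hK)

lemma expect_det_bordered_single [Finite R] {a : R} (ha : ∀ c, IsUnit (a * c - 1)) :
    𝔼 B : symmetricMatrices (Unit ⊕ ι) R, f (bordered a (Pi.single (.inl ()) 1) B.1).det
      = symDetMean ι f := by
  have := Fintype.ofFinite R
  have hinner (c : R) (w : ι → R) : 𝔼 D : symmetricMatrices ι R,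
      f (bordered a (Pi.single (.inl ()) 1) (bordered c w D.1)).det = symDetMean ι f := by
    simp only [det_bordered_single_bordered]
    refine expect_det_fromBlocks hf (by simpa using ha c) (IsSymm.ext fun i j => ?_) _
    fin_cases i <;> fin_cases j <;> rfl
  rw [expect_symmetricMatrices_sum fun B => f (bordered a (Pi.single (.inl ()) 1) B).det]
  simp only [hinner, Fintype.expect_const]

lemma expect_det_bordered_of_exists_isUnit [Finite R] {a : R} (ha : ∀ c, IsUnit (a * c - 1))
    {v : Unit ⊕ ι → R} (hv : ∃ j, IsUnit (v j)) :
    𝔼 B : symmetricMatrices (Unit ⊕ ι) R, f (bordered a v B.1).det = symDetMean ι f := by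
  obtain ⟨h, hh, rfl⟩ := exists_isUnit_single_vecMul (.inl ()) hv
  rw [← expect_symmetricMatrices_congr hh
    fun B => f (bordered a (Pi.single (.inl ()) 1 ᵥ* h) B).det, ← expect_det_bordered_single hf ha]
  refine Finset.expect_congr rfl fun B _ => hf ?_
  have hdet := det_bordered_congr 1 a (Pi.single (.inl ()) 1) h B.1
  rw [one_pow, one_mul, one_smul, one_mul] at hdet
  rw [hdet]
  exact associated_unit_mul_left _ _ (((isUnit_iff_isUnit_det h).mp hh).pow 2)

end SymmetricMatrices

section LocalRing

variable {ι R : Type*} [Fintype ι] [CommRing R] [IsLocalRing R]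

lemma isUnit_of_not_dvd {ϖ : R} (hϖ : maximalIdeal R = Ideal.span {ϖ}) {a : R}
    (ha : ¬ ϖ ∣ a) : IsUnit a := by
  rwa [← notMem_maximalIdeal, hϖ, Ideal.mem_span_singleton]

variable {ϖ : R} (hϖ : maximalIdeal R = Ideal.span {ϖ})
include hϖ

lemma index_range_mulLeft :
    (AddMonoidHom.mulLeft ϖ).range.index = Nat.card (ResidueField R) := by
  have hrange : (AddMonoidHom.mulLeft ϖ).range = (maximalIdeal R).toAddSubgroup := by
    ext x
    rw [hϖ, Submodule.mem_toAddSubgroup, Ideal.mem_span_singleton, AddMonoidHom.mem_range]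
    exact exists_congr fun _ => eq_comm
  rw [hrange]
  rfl

lemma index_range_smul_pi :
    (DistribSMul.toAddMonoidHom (ι → R) ϖ).range.index
      = Nat.card (ResidueField R) ^ Fintype.card ι := by
  have hrange : (DistribSMul.toAddMonoidHom (ι → R) ϖ).range
      = AddSubgroup.pi Set.univ fun _ => (AddMonoidHom.mulLeft ϖ).range := by
    ext v
    simp [AddSubgroup.mem_pi, funext_iff, Classical.skolem]
  rw [hrange, AddSubgroup.index_pi, Finset.prod_const, index_range_mulLeft hϖ, Finset.card_univ]

lemma isUnit_mul_mul_sub_one (a c : R) : IsUnit (ϖ * a * c - 1) := by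
  have hmem : ϖ * a * c ∈ maximalIdeal R := by
    rw [hϖ, mul_assoc]
    exact Ideal.mul_mem_right _ _ (Ideal.mem_span_singleton_self ϖ)
  rw [← IsUnit.neg_iff, neg_sub]
  exact isUnit_one_sub_self_of_mem_nonunits _ hmem

variable [Fintype R] {q : ℝ} (hq : q = 1 / Nat.card (ResidueField R)) {c : ℝ}
include hq

lemma expect_eq_of_const_isUnit {g : R → ℝ} (hg : ∀ a, IsUnit a → g a = c) :
    𝔼 a, g a = (1 - q) * c + q * 𝔼 b, g (ϖ * b) := by
  rw [expect_eq_of_const_off_range (AddMonoidHom.mulLeft ϖ) (c := c), index_range_mulLeft hϖ, ← hq]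
  · rfl
  · refine fun a ha => hg a (isUnit_of_not_dvd hϖ ?_)
    rintro ⟨b, rfl⟩
    exact ha ⟨b, rfl⟩

lemma expect_pi_eq_of_const_isUnit [DecidableEq ι] {g : (ι → R) → ℝ}
    (hg : ∀ v, (∃ i, IsUnit (v i)) → g v = c) :
    𝔼 v, g v = (1 - q ^ Fintype.card ι) * c + q ^ Fintype.card ι * 𝔼 w, g (ϖ • w) := by
  rw [expect_eq_of_const_off_range (DistribSMul.toAddMonoidHom (ι → R) ϖ) (c := c),
    index_range_smul_pi hϖ, Nat.cast_pow, ← _root_.one_div_pow, ← hq]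
  · rfl
  · refine fun v hv => hg v ?_
    by_contra! hunit
    choose w hw using fun i => not_imp_comm.mp (isUnit_of_not_dvd hϖ) (hunit i)
    exact hv ⟨w, funext fun i => (hw i).symm⟩

variable [DecidableEq ι] {f : R → ℝ} (hf : ∀ ⦃x y⦄, Associated x y → f x = f y)
include hf

lemma symDetMean_sum :
    symDetMean (Unit ⊕ ι) f = (1 - q) * symDetMean ι f
      + q * 𝔼 a, 𝔼 v, 𝔼 B : symmetricMatrices ι R, f (bordered (ϖ * a) v B.1).det := by
  rw [symDetMean, expect_symmetricMatrices_sum fun A => f A.det]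
  refine expect_eq_of_const_isUnit hϖ hq
    (g := fun a => 𝔼 v, 𝔼 B : symmetricMatrices ι R, f (bordered a v B.1).det) fun a ha => ?_
  have hrow (v : ι → R) :
      𝔼 B : symmetricMatrices ι R, f (bordered a v B.1).det = symDetMean ι f := by
    simpa only [one_mul, one_smul] using expect_det_bordered_isUnit hf 1 ha v
  simp only [hrow, Fintype.expect_const]

lemma expect_det_bordered_mul (a : R) :
    𝔼 v, 𝔼 B : symmetricMatrices (Unit ⊕ ι) R, f (bordered (ϖ * a) v B.1).det
      = (1 - q ^ (Fintype.card ι + 1)) * symDetMean ι f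
        + q ^ (Fintype.card ι + 1)
          * 𝔼 w, 𝔼 B : symmetricMatrices (Unit ⊕ ι) R, f (bordered (ϖ * a) (ϖ • w) B.1).det := by
  have hcard : Fintype.card (Unit ⊕ ι) = Fintype.card ι + 1 := by simp [add_comm]
  rw [← hcard]
  exact expect_pi_eq_of_const_isUnit hϖ hq fun v =>
    expect_det_bordered_of_exists_isUnit hf (isUnit_mul_mul_sub_one hϖ a) (v := v)

lemma expect_det_bordered_mul_smul :
    𝔼 a, 𝔼 w, 𝔼 B : symmetricMatrices ι R, f (bordered (ϖ * a) (ϖ • w) B.1).det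
      = (1 - q) * symDetMean ι (fun x => f (ϖ * x))
        + q * symDetMean (Unit ⊕ ι) (fun x => f (ϖ ^ 2 * x)) := by
  have hdet (a : R) (w : ι → R) (B : Matrix ι ι R) :
      (bordered (ϖ * (ϖ * a)) (ϖ • w) B).det = ϖ ^ 2 * (bordered a w B).det := by
    have hcongr := det_bordered_congr ϖ a w 1 B
    rwa [vecMul_one, transpose_one, Matrix.one_mul, Matrix.mul_one, det_one, mul_one, sq ϖ,
      mul_assoc, ← sq] at hcongr
  have hmean : symDetMean (Unit ⊕ ι) (fun x => f (ϖ ^ 2 * x)) = 𝔼 a, 𝔼 w,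
      𝔼 B : symmetricMatrices ι R, f (bordered (ϖ * (ϖ * a)) (ϖ • w) B.1).det := by
    rw [symDetMean, expect_symmetricMatrices_sum fun A => f (ϖ ^ 2 * A.det)]
    simp only [hdet]
  rw [hmean]
  refine expect_eq_of_const_isUnit hϖ hq (g := fun a => 𝔼 w,
    𝔼 B : symmetricMatrices ι R, f (bordered (ϖ * a) (ϖ • w) B.1).det) fun a ha => ?_
  simp only [expect_det_bordered_isUnit hf ϖ ha, Fintype.expect_const]

omit [Fintype R] in
lemma symDetMean_sum_sum [Finite R] :
    symDetMean (Unit ⊕ Unit ⊕ ι) f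
      = (1 - q) * symDetMean (Unit ⊕ ι) f
        + q * (1 - q ^ (Fintype.card ι + 1)) * symDetMean ι f
        + q ^ (Fintype.card ι + 2) * (1 - q) * symDetMean (Unit ⊕ ι) (fun x => f (ϖ * x))
        + q ^ (Fintype.card ι + 3) * symDetMean (Unit ⊕ Unit ⊕ ι) (fun x => f (ϖ ^ 2 * x)) := by
  have := Fintype.ofFinite R
  rw [symDetMean_sum hϖ hq hf]
  simp only [expect_det_bordered_mul hϖ hq hf, Finset.expect_add_distrib, Fintype.expect_const,
    ← Finset.mul_expect, expect_det_bordered_mul_smul hϖ hq hf]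
  ring

end LocalRing

theorem Psym_five_term_recurrence_general {R : Type*} [CommRing R] [IsLocalRing R] [Finite R]
    {ϖ : R} (hϖ : maximalIdeal R = Ideal.span {ϖ}) {f : R → ℝ}
    (hf : ∀ ⦃x y⦄, Associated x y → f x = f y) {q : ℝ} (hq : q = 1 / Nat.card (ResidueField R))
    {n : ℕ} (hn : 2 ≤ n) :
    symDetMean (Fin n) f =
      (1 - q) * symDetMean (Fin (n - 1)) f + q * (1 - q ^ (n - 1)) * symDetMean (Fin (n - 2)) f
        + q ^ n * (1 - q) * symDetMean (Fin (n - 1)) (fun x => f (ϖ * x))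
        + q ^ (n + 1) * symDetMean (Fin n) (fun x => f (ϖ ^ 2 * x)) := by
  obtain ⟨d, rfl⟩ := Nat.exists_eq_add_of_le' hn
  have e₁ : Unit ⊕ Fin d ≃ Fin (d + 1) := Fintype.equivOfCardEq (by simp [add_comm])
  have e₂ : Unit ⊕ Unit ⊕ Fin d ≃ Fin (d + 2) := Fintype.equivOfCardEq (by simp +arith)
  have hrec := symDetMean_sum_sum (ι := Fin d) hϖ hq hf
  simp only [symDetMean_congr e₁, symDetMean_congr e₂, Fintype.card_fin] at hrec
  exact hrec

section ZMod

variable {p μ : ℕ} [NeZero p]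

lemma natCast_pow_mul_eq_zero_iff {k : ℕ} (hk : k ≤ μ) (x : ZMod (p ^ μ)) :
    (p : ZMod (p ^ μ)) ^ k * x = 0
      ↔ ZMod.castHom (pow_dvd_pow p (Nat.sub_le μ k)) (ZMod (p ^ (μ - k))) x = 0 := by
  obtain ⟨a, rfl⟩ := ZMod.natCast_zmod_surjective x
  rw [map_natCast, ZMod.natCast_eq_zero_iff, ← Nat.cast_pow, ← Nat.cast_mul,
    ZMod.natCast_eq_zero_iff, ← pow_mul_pow_sub p hk]
  exact Nat.mul_dvd_mul_iff_left (pow_pos (NeZero.pos p) k)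

lemma Psym_eq_symDetMean (n m : ℕ) [NeZero m] :
    Psym n m = symDetMean (Fin n) fun x : ZMod m => if x ≠ 0 then 1 else 0 := by
  have hcount : Nsym n m = Nat.card {A : symmetricMatrices (Fin n) (ZMod m) // A.1.det ≠ 0} :=
    Nat.card_congr (Equiv.subtypeSubtypeEquivSubtypeInter
      (fun A => A ∈ symmetricMatrices (Fin n) (ZMod m)) (fun A => A.det ≠ 0)).symm
  rw [Psym, hcount, symDetMean, Fintype.expect_eq_sum_div_card, card_symmetricMatrices,
    ZMod.card, Fintype.card_fin, Nat.cast_pow, Nat.card_eq_fintype_card, Fintype.card_subtype,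
    Finset.sum_boole]

lemma Psym_pow_sub (n : ℕ) {k : ℕ} (hk : k ≤ μ) :
    Psym n (p ^ (μ - k)) = symDetMean (Fin n) fun x : ZMod (p ^ μ) =>
      if (p : ZMod (p ^ μ)) ^ k * x ≠ 0 then 1 else 0 := by
  have hdvd := pow_dvd_pow p (Nat.sub_le μ k)
  rw [Psym_eq_symDetMean, ← symDetMean_comp_ringHom _ (ZMod.castHom_surjective hdvd)]
  simp only [ne_eq, natCast_pow_mul_eq_zero_iff hk]

lemma isLocalHom_castHom_pow [NeZero μ] :
    IsLocalHom (ZMod.castHom (dvd_pow_self p (NeZero.ne μ)) (ZMod p)) where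
  map_nonunit x hx := by
    obtain ⟨a, rfl⟩ := ZMod.natCast_zmod_surjective x
    rw [map_natCast, ZMod.isUnit_iff_coprime] at hx
    exact (ZMod.isUnit_iff_coprime _ _).mpr (hx.pow_right μ)

end ZMod

section ZModPrime

variable {p μ : ℕ} [Fact p.Prime] [NeZero μ]

instance : IsLocalRing (ZMod (p ^ μ)) :=
  have := isLocalHom_castHom_pow (p := p) (μ := μ)
  RingHom.domain_isLocalRing (ZMod.castHom (dvd_pow_self p (NeZero.ne μ)) (ZMod p))

lemma maximalIdeal_zmod_pow :
    maximalIdeal (ZMod (p ^ μ)) = Ideal.span {(p : ZMod (p ^ μ))} := by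
  rw [← ker_eq_maximalIdeal _ (ZMod.castHom_surjective (dvd_pow_self p (NeZero.ne μ)))]
  ext x
  obtain ⟨a, rfl⟩ := ZMod.natCast_zmod_surjective x
  rw [RingHom.mem_ker, Ideal.mem_span_singleton]
  refine ⟨fun ha => ?_, ?_⟩
  · rw [map_natCast, ZMod.natCast_eq_zero_iff] at ha
    exact Nat.cast_dvd_cast ha
  · intro ⟨y, hy⟩
    rw [hy, map_mul, map_natCast, ZMod.natCast_self, zero_mul]

lemma card_residueField_zmod_pow :
    Nat.card (ResidueField (ZMod (p ^ μ))) = p := by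
  have hφ := ZMod.castHom_surjective (dvd_pow_self p (NeZero.ne μ))
  rw [ResidueField, ← ker_eq_maximalIdeal _ hφ,
    Nat.card_congr (RingHom.quotientKerEquivOfSurjective hφ).toEquiv, Nat.card_zmod]

end ZModPrime

theorem Psym_five_term_recurrence (p : ℕ) (hp : p.Prime) (q : ℝ) (hq : q = 1 / p)
    (n μ : ℕ) (hn : 2 ≤ n) (hμ : 2 ≤ μ) :
    Psym n (p ^ μ) =
      (1 - q) * Psym (n - 1) (p ^ μ) + q * (1 - q ^ (n - 1)) * Psym (n - 2) (p ^ μ)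
        + q ^ n * (1 - q) * Psym (n - 1) (p ^ (μ - 1))
        + q ^ (n + 1) * Psym n (p ^ (μ - 2)) := by
  have := Fact.mk hp
  have : NeZero μ := ⟨by omega⟩
  rw [Psym_pow_sub (n - 1) (by omega : 1 ≤ μ), Psym_pow_sub n hμ, pow_one]
  simp only [Psym_eq_symDetMean]
  exact Psym_five_term_recurrence_general maximalIdeal_zmod_pow
    (fun _ _ hxy => by simp only [ne_eq, hxy.eq_zero_iff])
    (by rw [card_residueField_zmod_pow, hq]) hn
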